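/- arXiv:1308.4035 — 4 statements merged into one kernel-verified Lean document; each statement's English description precedes it below -/
import Mathlib

section
/- Let S be an arithmetic normed semigroup and φ : S → S a contractive semigroup endomorphism that is locally quasi periodic, i.e. for every x ∈ S there exist n ∈ ℕ and k ∈ ℕ with k > 0 such that φ^n(x) = φ^{n+k}(x). Then h_S(φ) = 0. -/
open scoped ENNReal

/-- The `n`-th trajectory (with `traj φ x n = T_{n+1}(φ,x) = x·φ(x)·…·φⁿ(x)`). -/
def traj {S : Type*} [Semigroup S] (φ : S → S) (x : S) : ℕ → S
  | 0 => x
  | n + 1 => traj φ x n * φ^[n + 1] x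

/-- The semigroup entropy of `φ` at `x`: `h_S(φ,x) = lim_n v(T_n(φ,x))/n`
(the limit exists for contractive endomorphisms, and equals the `limsup`). -/
noncomputable def hloc {S : Type*} [Semigroup S] (v : S → ℝ) (φ : S → S) (x : S) : ℝ :=
  Filter.limsup (fun n : ℕ => v (traj φ x n) / ((n : ℝ) + 1)) Filter.atTop

/-- The semigroup entropy `h_S(φ) = sup_{x ∈ S} h_S(φ,x) ∈ [0,∞]`. -/
noncomputable def hent {S : Type*} [Semigroup S] (v : S → ℝ) (φ : S → S) : ℝ≥0∞ :=
  ⨆ x : S, ENNReal.ofReal (hloc v φ x)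

lemma traj_add {S : Type*} [Semigroup S] (φ : S → S) (x : S) (a b : ℕ) :
    traj φ x (a + b + 1) = traj φ x a * traj φ (φ^[a + 1] x) b := by
  induction b with
  | zero => rfl
  | succ b ih =>
    have h1 : traj φ x (a + (b + 1) + 1)
        = traj φ x (a + b + 1) * φ^[a + b + 1 + 1] x := rfl
    have h2 : traj φ (φ^[a + 1] x) (b + 1)
        = traj φ (φ^[a + 1] x) b * φ^[b + 1] (φ^[a + 1] x) := rfl
    rw [h1, h2, ih, mul_assoc, ← Function.iterate_add_apply]
    congr 3
    omega

lemma v_iter_le {S : Type*} (v : S → ℝ) (φ : S → S)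
    (hφcontr : ∀ x : S, v (φ x) ≤ v x) (x : S) (n : ℕ) : v (φ^[n] x) ≤ v x := by
  induction n with
  | zero => exact le_rfl
  | succ n ih =>
    rw [Function.iterate_succ_apply']
    exact (hφcontr _).trans ih

lemma v_traj_le {S : Type*} [Semigroup S] (v : S → ℝ)
    (hvmul : ∀ x y : S, v (x * y) ≤ v x + v y) (φ : S → S)
    (hφcontr : ∀ x : S, v (φ x) ≤ v x) (x : S) (n : ℕ) :
    v (traj φ x n) ≤ ((n : ℝ) + 1) * v x := by
  induction n with
  | zero => simp [traj]
  | succ n ih =>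
    have h1 := hvmul (traj φ x n) (φ^[n + 1] x)
    have h2 := v_iter_le v φ hφcontr x (n + 1)
    have h3 : traj φ x (n + 1) = traj φ x n * φ^[n + 1] x := rfl
    rw [h3]
    push_cast
    linarith

lemma iter_mul_fix {S : Type*} (φ : S → S) (y : S) (k m : ℕ) (h : φ^[k] y = y) :
    φ^[k * m] y = y := by
  rw [Function.iterate_mul]
  exact Function.iterate_fixed h m

lemma traj_periodic {S : Type*} [Semigroup S] (φ : S → S) (y : S) (k m : ℕ)
    (h : φ^[k + 1] y = y) :
    traj φ y ((k + 1) * m + k) = traj id (traj φ y k) m := by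
  induction m with
  | zero => simp [traj]
  | succ m ih =>
    have e : (k + 1) * (m + 1) + k = ((k + 1) * m + k) + k + 1 := by ring
    have e2 : (k + 1) * m + k + 1 = (k + 1) * (m + 1) := by ring
    rw [e, traj_add, ih, e2, iter_mul_fix φ y _ _ h]
    simp [traj]

lemma periodic_bound {S : Type*} [Semigroup S] (v : S → ℝ)
    (hv0 : ∀ x : S, 0 ≤ v x)
    (hvmul : ∀ x y : S, v (x * y) ≤ v x + v y)
    (φ : S → S) (hφcontr : ∀ x : S, v (φ x) ≤ v x)
    (y : S) (k : ℕ) (h : φ^[k + 1] y = y) (C : ℝ) (hC : 0 < C)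
    (hb : ∀ n : ℕ, v (traj id (traj φ y k) n) ≤ C * Real.log ((n : ℝ) + 2)) (j : ℕ) :
    v (traj φ y j) ≤ C * Real.log ((j : ℝ) + 2) + ((k : ℝ) + 1) * v y := by
  have hlog : ∀ m : ℕ, m ≤ j →
      C * Real.log ((m : ℝ) + 2) ≤ C * Real.log ((j : ℝ) + 2) := by
    intro m hm
    have : (m : ℝ) ≤ j := by exact_mod_cast hm
    gcongr
  have hl0 : 0 ≤ C * Real.log ((j : ℝ) + 2) :=
    mul_nonneg hC.le (Real.log_nonneg (by have : (0 : ℝ) ≤ j := j.cast_nonneg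
                                          linarith))
  have hsmall : ∀ r : ℕ, r ≤ k → v (traj φ y r) ≤ ((k : ℝ) + 1) * v y := by
    intro r hr
    have h1 := v_traj_le v hvmul φ hφcontr y r
    have h2 : (r : ℝ) ≤ k := by exact_mod_cast hr
    have := mul_le_mul_of_nonneg_right h2 (hv0 y)
    linarith
  by_cases hj : j ≤ k
  · linarith [hsmall j hj]
  · obtain ⟨t, rfl⟩ : ∃ t, j = k + 1 + t := ⟨j - (k + 1), by omega⟩
    have hdm := Nat.div_add_mod t (k + 1)
    have hlt := Nat.mod_lt t (Nat.succ_pos k)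
    have hle := Nat.div_le_self t (k + 1)
    generalize t / (k + 1) = m at *
    generalize t % (k + 1) = r at *
    have e : k + 1 + t = (k + 1) * m + k + r + 1 := by omega
    have e2 : (k + 1) * m + k + 1 = (k + 1) * (m + 1) := by ring
    have h1 : traj φ y (k + 1 + t) = traj id (traj φ y k) m * traj φ y r := by
      rw [e, traj_add, e2, iter_mul_fix φ y _ _ h, traj_periodic φ y k m h]
    rw [h1]
    have h2 := hvmul (traj id (traj φ y k) m) (traj φ y r)
    have h3 := hb m
    have h4 := hlog m (by omega)
    have h5 := hsmall r (by omega)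
    linarith

lemma traj_bound {S : Type*} [Semigroup S] (v : S → ℝ)
    (hv0 : ∀ x : S, 0 ≤ v x)
    (hvmul : ∀ x y : S, v (x * y) ≤ v x + v y)
    (harith : ∀ x : S, ∃ C : ℝ, 0 < C ∧
      ∀ n : ℕ, v (traj id x n) ≤ C * Real.log ((n : ℝ) + 2))
    (φ : S → S)
    (hφcontr : ∀ x : S, v (φ x) ≤ v x)
    (hlqp : ∀ x : S, ∃ n k : ℕ, 0 < k ∧ φ^[n] x = φ^[n + k] x) (x : S) :
    ∃ A C : ℝ, ∀ i : ℕ, v (traj φ x i) ≤ A + C * Real.log ((i : ℝ) + 2) := by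
  obtain ⟨n, k, hk, hnk⟩ := hlqp x
  obtain ⟨k, rfl⟩ : ∃ k', k = k' + 1 := ⟨k - 1, by omega⟩
  have hy : φ^[k + 1] (φ^[n + 1] x) = φ^[n + 1] x := by
    rw [← Function.iterate_add_apply, show k + 1 + (n + 1) = (n + (k + 1)) + 1 by ring,
      Function.iterate_succ_apply', ← hnk, Function.iterate_succ_apply']
  obtain ⟨C, hC, hb⟩ := harith (traj φ (φ^[n + 1] x) k)
  have hP := periodic_bound v hv0 hvmul φ hφcontr _ k hy C hC hb
  refine ⟨((n : ℝ) + 1) * v x + ((k : ℝ) + 1) * v (φ^[n + 1] x), C, fun i => ?_⟩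
  have hl0 : 0 ≤ C * Real.log ((i : ℝ) + 2) :=
    mul_nonneg hC.le (Real.log_nonneg (by have : (0 : ℝ) ≤ i := i.cast_nonneg
                                          linarith))
  have hk0 : 0 ≤ ((k : ℝ) + 1) * v (φ^[n + 1] x) := mul_nonneg (by positivity) (hv0 _)
  by_cases hi : i ≤ n
  · have h1 := v_traj_le v hvmul φ hφcontr x i
    have h2 : (i : ℝ) ≤ n := by exact_mod_cast hi
    have := mul_le_mul_of_nonneg_right h2 (hv0 x)
    linarith
  · obtain ⟨j, rfl⟩ : ∃ j, i = n + j + 1 := ⟨i - (n + 1), by omega⟩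
    rw [traj_add]
    have h1 := hvmul (traj φ x n) (traj φ (φ^[n + 1] x) j)
    have h2 := v_traj_le v hvmul φ hφcontr x n
    have h3 := hP j
    have h4 : C * Real.log ((j : ℝ) + 2) ≤ C * Real.log (((n + j + 1 : ℕ) : ℝ) + 2) := by
      have : (j : ℝ) ≤ ((n + j + 1 : ℕ) : ℝ) := by exact_mod_cast (by omega)
      gcongr
    linarith

lemma bound_tendsto (A C : ℝ) :
    Filter.Tendsto (fun i : ℕ => (A + C * Real.log ((i : ℝ) + 2)) / ((i : ℝ) + 1))
      Filter.atTop (nhds 0) := by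
  have h1 : Filter.Tendsto (fun i : ℕ => (i : ℝ) + 2) Filter.atTop Filter.atTop :=
    Filter.tendsto_atTop_add_const_right _ _ tendsto_natCast_atTop_atTop
  have h2 : Filter.Tendsto (fun x : ℝ => Real.log x ^ 1 / (1 * x + (-1)))
      Filter.atTop (nhds 0) :=
    Real.tendsto_pow_log_div_mul_add_atTop 1 (-1) 1 one_ne_zero
  have h3 := (h2.comp h1).const_mul C
  have h4 := (tendsto_one_div_add_atTop_nhds_zero_nat (𝕜 := ℝ)).const_mul A
  have h5 := h4.add h3
  simp only [mul_zero, add_zero] at h5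
  refine h5.congr fun i => ?_
  have : (1 : ℝ) * ((i : ℝ) + 2) + (-1) = (i : ℝ) + 1 := by ring
  simp only [Function.comp, this, pow_one]
  ring

/-- If `S` is an arithmetic normed semigroup and `φ : S → S` is a
contractive semigroup endomorphism which is locally quasi periodic, then `h_S(φ) = 0`. -/
theorem statement_1 {S : Type*} [Semigroup S] (v : S → ℝ)
    (hv0 : ∀ x : S, 0 ≤ v x)
    (hvmul : ∀ x y : S, v (x * y) ≤ v x + v y)
    (harith : ∀ x : S, ∃ C : ℝ, 0 < C ∧
      ∀ n : ℕ, v (traj id x n) ≤ C * Real.log ((n : ℝ) + 2))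
    (φ : S → S)
    (hφmul : ∀ x y : S, φ (x * y) = φ x * φ y)
    (hφcontr : ∀ x : S, v (φ x) ≤ v x)
    (hlqp : ∀ x : S, ∃ n k : ℕ, 0 < k ∧ φ^[n] x = φ^[n + k] x) :
    hent v φ = 0 := by
  simp only [hent, ENNReal.iSup_eq_zero, ENNReal.ofReal_eq_zero]
  intro x
  obtain ⟨A, C, hb⟩ := traj_bound v hv0 hvmul harith φ hφcontr hlqp x
  have ht : Filter.Tendsto (fun n : ℕ => v (traj φ x n) / ((n : ℝ) + 1))
      Filter.atTop (nhds 0) := by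
    refine squeeze_zero (fun n => div_nonneg (hv0 _) (by positivity)) (fun n => ?_)
      (bound_tendsto A C)
    have := hb n
    gcongr
  exact ht.limsup_eq.le
end

section
/- (Addition Theorem for the algebraic entropy) Let G be an abelian group, φ : G → G an endomorphism, H a φ-invariant subgroup of G (i.e. φ(H) ⊆ H), and φ̄ : G/H → G/H the endomorphism induced by φ on the quotient. Then h_alg(φ) = h_alg(φ↾_H) + h_alg(φ̄), as an equality in [0,∞]. -/
open scoped Pointwise ENNReal

/-- The `n`-th trajectory of a finite subset `F` under `φ`
(`Tn φ F n = T_{n+1}(φ,F) = F·φ(F)·…·φⁿ(F)`, a pointwise product of finsets). -/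
noncomputable def Tn {G : Type*} [Group G] (φ : G → G) (F : Finset G) : ℕ → Finset G
  | 0 => F
  | n + 1 =>
      letI := Classical.decEq G
      Tn φ F n * F.image φ^[n + 1]

/-- `H_alg(φ,F) = lim_n (log |T_n(φ,F)|)/n` (the limit exists, and equals the `limsup`). -/
noncomputable def Halg {G : Type*} [Group G] (φ : G → G) (F : Finset G) : ℝ :=
  Filter.limsup (fun n : ℕ => Real.log (Tn φ F n).card / ((n : ℝ) + 1)) Filter.atTop

/-- The algebraic entropy `h_alg(φ) = sup {H_alg(φ,F) : F nonempty finite} ∈ [0,∞]`. -/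
noncomputable def halg {G : Type*} [Group G] (φ : G → G) : ℝ≥0∞ :=
  ⨆ F : Finset G, ⨆ _ : F.Nonempty, ENNReal.ofReal (Halg φ F)

section Helpers

variable {G : Type*} [CommGroup G]

/-- Trajectory with `n` factors. -/
def Tr [DecidableEq G] (φ : G → G) (F : Finset G) : ℕ → Finset G
  | 0 => 1
  | n + 1 => Tr φ F n * F.image φ^[n]

theorem Tn_eq_Tr [inst : DecidableEq G] (φ : G → G) (F : Finset G) (n : ℕ) :
    Tn φ F n = Tr φ F (n + 1) := by
  obtain rfl : inst = Classical.decEq G := Subsingleton.elim _ _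
  induction n with
  | zero => simp only [Tn, Tr, Function.iterate_zero, Finset.image_id]; exact (@one_mul (Finset G) (@Finset.mulOneClass G (Classical.decEq G) _) F).symm
  | succ n ih => rw [Tn, ih]; rfl

theorem image_Tr {G' : Type*} [CommGroup G'] [DecidableEq G] [DecidableEq G']
    (φ : G → G) (φ' : G' → G') (f : G →* G') (h : ∀ x, f (φ x) = φ' (f x))
    (F : Finset G) (n : ℕ) :
    (Tr φ F n).image f = Tr φ' (F.image f) n := by
  induction n with
  | zero => simp [Tr]; rfl
  | succ n ih =>
    rw [Tr, Tr, Finset.image_mul, ih, Finset.image_image, Finset.image_image]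
    congr 2
    have : Function.Semiconj f φ φ' := h
    exact (this.iterate_right n).comp_eq

theorem Tr_mul [DecidableEq G] (φ : G →* G) (F F' : Finset G) (n : ℕ) :
    Tr φ (F * F') n = Tr φ F n * Tr φ F' n := by
  induction n with
  | zero => simp [Tr]
  | succ n ih =>
    have h : (F * F').image (φ^[n]) = F.image φ^[n] * F'.image φ^[n] :=
      Finset.image_image₂_distrib (fun a b => iterate_map_mul φ n a b)
    rw [Tr, Tr, Tr, ih, h, mul_mul_mul_comm]

theorem Tr_add [DecidableEq G] (φ : G →* G) (F : Finset G) (m n : ℕ) :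
    Tr φ F (m + n) = Tr φ F m * (Tr φ F n).image φ^[m] := by
  induction n with
  | zero => simp [Tr, iterate_map_one]; exact (mul_one _).symm
  | succ n ih =>
    have h : (Tr φ F n * F.image φ^[n]).image (φ^[m])
        = (Tr φ F n).image φ^[m] * (F.image φ^[n]).image φ^[m] :=
      Finset.image_image₂_distrib (fun a b => iterate_map_mul φ m a b)
    rw [← add_assoc, Tr, Tr, ih, h, mul_assoc, Finset.image_image, Function.iterate_add]

theorem Tr_nonempty [DecidableEq G] (φ : G → G) {F : Finset G} (hF : F.Nonempty) (n : ℕ) :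
    (Tr φ F n).Nonempty := by
  induction n with
  | zero => simp [Tr]
  | succ n ih => exact ih.mul (hF.image _)

theorem one_mem_Tr [DecidableEq G] (φ : G →* G) {F : Finset G} (hF : 1 ∈ F) (n : ℕ) :
    1 ∈ Tr φ F n := by
  induction n with
  | zero => simp [Tr]
  | succ n ih =>
    exact Finset.mem_mul.2 ⟨1, ih, 1, Finset.mem_image.2 ⟨1, hF, iterate_map_one φ n⟩, one_mul _⟩

theorem subset_Tr [DecidableEq G] (φ : G →* G) {F : Finset G} (hF : 1 ∈ F) {m : ℕ} (hm : 0 < m) :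
    F ⊆ Tr φ F m := by
  obtain ⟨n, rfl⟩ : ∃ n, m = 1 + n := ⟨m - 1, by omega⟩
  intro x hx
  rw [Tr_add]
  exact Finset.mem_mul.2 ⟨x, by simpa [Tr] using hx, 1,
    Finset.mem_image.2 ⟨1, one_mem_Tr φ hF n, iterate_map_one φ 1⟩, mul_one _⟩

theorem card_Tr_pos [DecidableEq G] (φ : G → G) {F : Finset G} (hF : F.Nonempty) (n : ℕ) :
    (0 : ℝ) < (Tr φ F n).card := by
  exact_mod_cast (Tr_nonempty φ hF n).card_pos

theorem log_card_nonneg [DecidableEq G] (φ : G → G) {F : Finset G} (hF : F.Nonempty) (n : ℕ) :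
    0 ≤ Real.log (Tr φ F n).card :=
  Real.log_nonneg (by exact_mod_cast (Tr_nonempty φ hF n).card_pos)

theorem subadd [DecidableEq G] (φ : G →* G) {F : Finset G} (hF : F.Nonempty) :
    Subadditive (fun n => Real.log (Tr φ F n).card) := by
  intro m n
  dsimp only
  rw [← Real.log_mul (card_Tr_pos φ hF m).ne' (card_Tr_pos φ hF n).ne']
  apply Real.log_le_log (card_Tr_pos φ hF _)
  rw [Tr_add]
  calc ((Tr φ F m * (Tr φ F n).image φ^[m]).card : ℝ)
      ≤ (Tr φ F m).card * ((Tr φ F n).image φ^[m]).card := by 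
        exact_mod_cast Finset.card_mul_le (s := Tr φ F m) (t := (Tr φ F n).image φ^[m])
    _ ≤ _ := by 
        have := Finset.card_image_le (s := Tr φ F n) (f := φ^[m])
        gcongr

theorem tendsto_Halg [DecidableEq G] (φ : G →* G) {F : Finset G} (hF : F.Nonempty) :
    Filter.Tendsto (fun n : ℕ => Real.log (Tr φ F n).card / n) Filter.atTop
      (nhds (Halg φ F)) := by
  have hbdd : BddBelow (Set.range fun n : ℕ => Real.log (Tr φ F n).card / n) := by
    refine ⟨0, ?_⟩
    rintro _ ⟨n, rfl⟩
    exact div_nonneg (log_card_nonneg φ hF n) n.cast_nonneg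
  have h := (subadd φ hF).tendsto_lim hbdd
  have h2 := (Filter.tendsto_add_atTop_iff_nat 1).2 h
  have : Halg φ F = (subadd φ hF).lim := by
    rw [Halg]
    refine Filter.Tendsto.limsup_eq ?_
    refine h2.congr fun n => ?_
    rw [Tn_eq_Tr]
    push_cast
    rfl
  rwa [this]

theorem Halg_nonneg (φ : G →* G) {F : Finset G} (hF : F.Nonempty) : 0 ≤ Halg φ F := by
  classical
  exact ge_of_tendsto' (tendsto_Halg φ hF) fun n =>
    div_nonneg (log_card_nonneg φ hF n) n.cast_nonneg

theorem card_mul_ge [DecidableEq G] (H : Subgroup G) [DecidableEq (G ⧸ H)]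
    (A : Finset H) (C : Finset G) :
    A.card * (C.image (QuotientGroup.mk' H)).card ≤ (A.image H.subtype * C).card := by
  have hs : ∀ q : G ⧸ H, ∃ c : G, q ∈ C.image (QuotientGroup.mk' H) →
      c ∈ C ∧ QuotientGroup.mk' H c = q := by
    intro q
    by_cases hq : q ∈ C.image (QuotientGroup.mk' H)
    · obtain ⟨c, hc⟩ := Finset.mem_image.1 hq
      exact ⟨c, fun _ => hc⟩
    · exact ⟨1, fun h => absurd h hq⟩
  choose s hs using hs
  rw [← Finset.card_product]
  refine Finset.card_le_card_of_injOn (fun p => (p.1 : G) * s p.2) ?_ ?_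
  · rintro ⟨a, q⟩ h
    obtain ⟨ha, hq⟩ := Finset.mem_product.1 h
    exact Finset.mul_mem_mul (Finset.mem_image.2 ⟨a, ha, rfl⟩) (hs q hq).1
  · rintro ⟨a, q⟩ h ⟨a', q'⟩ h' e
    obtain ⟨ha, hq⟩ := Finset.mem_product.1 h
    obtain ⟨ha', hq'⟩ := Finset.mem_product.1 h'
    dsimp only at e hq hq'
    have hk : ∀ a : H, QuotientGroup.mk' H (a : G) = 1 := fun a =>
      (QuotientGroup.eq_one_iff _).2 a.2
    have e2 := congrArg (QuotientGroup.mk' H) e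
    rw [map_mul, map_mul, hk, hk, one_mul, one_mul, (hs q hq).2, (hs q' hq').2] at e2
    subst e2
    have := mul_right_cancel e
    rw [Subtype.ext this]

theorem subset_section [DecidableEq G] (H : Subgroup G) [DecidableEq (G ⧸ H)]
    {A : Finset G} (hA : A.Nonempty) :
    ∃ (S : Finset G) (B : Finset H), S.card ≤ (A.image (QuotientGroup.mk' H)).card ∧
      1 ∈ B ∧ A ⊆ S * B.image H.subtype := by
  have hs : ∀ q : G ⧸ H, ∃ c : G, q ∈ A.image (QuotientGroup.mk' H) →
      c ∈ A ∧ QuotientGroup.mk' H c = q := by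
    intro q
    by_cases hq : q ∈ A.image (QuotientGroup.mk' H)
    · obtain ⟨c, hc⟩ := Finset.mem_image.1 hq
      exact ⟨c, fun _ => hc⟩
    · exact ⟨1, fun h => absurd h hq⟩
  choose s hs using hs
  refine ⟨(A.image (QuotientGroup.mk' H)).image s,
    (A / A).preimage (fun x : H => (x : G)) Subtype.val_injective.injOn,
    Finset.card_image_le, ?_, ?_⟩
  · obtain ⟨a, ha⟩ := hA
    rw [Finset.mem_preimage]
    exact Finset.mem_div.2 ⟨a, ha, a, ha, by simp⟩
  · intro a ha
    have hq := Finset.mem_image_of_mem (QuotientGroup.mk' H) ha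
    obtain ⟨h1, h2⟩ := hs _ hq
    have hmem : a / s (QuotientGroup.mk' H a) ∈ H := by
      rw [← QuotientGroup.eq_one_iff]
      change QuotientGroup.mk' H _ = 1
      rw [map_div, h2, div_self']
    refine Finset.mem_mul.2 ⟨_, Finset.mem_image_of_mem s hq, a / s (QuotientGroup.mk' H a),
      Finset.mem_image.2 ⟨⟨_, hmem⟩, ?_, rfl⟩, mul_div_cancel _ _⟩
    rw [Finset.mem_preimage]
    exact Finset.div_mem_div ha h1

theorem cover [DecidableEq G] (H : Subgroup G) (φ : G →* G) (ψ : H →* H)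
    (hψ : ∀ x : H, (ψ x : G) = φ x) (F S : Finset G) (B : Finset H) (hB : 1 ∈ B)
    {m : ℕ} (hm : 0 < m) (hS : Tr φ F m ⊆ S * B.image H.subtype) (k : ℕ) :
    ∃ R : Finset G, R.card ≤ S.card ^ k ∧
      Tr φ F (m * k) ⊆ R * (Tr ψ B (m * k)).image H.subtype := by
  induction k with
  | zero => exact ⟨1, by simp, by simp [Tr]; right; rfl⟩
  | succ k ih =>
    obtain ⟨R, hR, hsub⟩ := ih
    refine ⟨R * S.image φ^[m * k], ?_, ?_⟩
    · rw [pow_succ]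
      exact Finset.card_mul_le.trans (Nat.mul_le_mul hR Finset.card_image_le)
    · have h1 : (S * B.image H.subtype).image (φ^[m * k])
          = S.image φ^[m * k] * (B.image H.subtype).image φ^[m * k] :=
        Finset.image_image₂_distrib (fun a b => iterate_map_mul φ (m * k) a b)
      have h2 : (B.image H.subtype).image φ^[m * k] = (B.image ψ^[m * k]).image H.subtype := by
        rw [Finset.image_image, Finset.image_image]
        congr 1
        have : Function.Semiconj H.subtype ψ φ := hψ
        exact (this.iterate_right (m * k)).comp_eq.symm
      rw [Nat.mul_succ, Tr_add, Tr_add, Finset.image_mul]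
      calc _ ⊆ (R * (Tr ψ B (m * k)).image H.subtype) *
              (S * B.image H.subtype).image φ^[m * k] :=
            Finset.mul_subset_mul hsub (Finset.image_subset_image hS)
        _ = (R * S.image φ^[m * k]) *
              ((Tr ψ B (m * k)).image H.subtype * (B.image ψ^[m * k]).image H.subtype) := by
            rw [h1, h2, mul_mul_mul_comm]
        _ ⊆ _ := Finset.mul_subset_mul_left (Finset.mul_subset_mul_left
            (Finset.image_subset_image (Finset.image_subset_image (subset_Tr ψ hB hm))))

theorem Halg_le [DecidableEq G] (H : Subgroup G) [DecidableEq (G ⧸ H)] (φ : G →* G) (ψ : H →* H)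
    (hψ : ∀ x : H, (ψ x : G) = φ x) (χ : G ⧸ H →* G ⧸ H)
    (hχ : ∀ x : G, QuotientGroup.mk' H (φ x) = χ (QuotientGroup.mk' H x))
    {F : Finset G} (hF : F.Nonempty) {m : ℕ} (hm : 0 < m) :
    ∃ B : Finset H, B.Nonempty ∧ Halg φ F ≤
      Real.log (Tr χ (F.image (QuotientGroup.mk' H)) m).card / m + Halg ψ B := by
  obtain ⟨S, B, hSc, hB, hS⟩ := subset_section H (Tr_nonempty φ hF m)
  rw [image_Tr φ χ _ hχ] at hSc
  refine ⟨B, ⟨1, hB⟩, ?_⟩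
  have hBn : B.Nonempty := ⟨1, hB⟩
  have hmk : Filter.Tendsto (fun k : ℕ => m * k) Filter.atTop Filter.atTop :=
    Filter.tendsto_id.const_mul_atTop' hm
  have t1 := (tendsto_Halg φ hF).comp hmk
  have t2 := ((tendsto_Halg ψ hBn).comp hmk).const_add
    (Real.log (Tr χ (F.image (QuotientGroup.mk' H)) m).card / m)
  refine le_of_tendsto_of_tendsto t1 t2 ?_
  filter_upwards [Filter.eventually_gt_atTop 0] with k hk
  obtain ⟨R, hR, hsub⟩ := cover H φ ψ hψ F S B hB hm hS k
  set s := (Tr χ (F.image (QuotientGroup.mk' H)) m).card with hsdef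
  have hs0 : (0 : ℝ) < s := card_Tr_pos χ (hF.image _) m
  have hb0 := card_Tr_pos ψ hBn (m * k)
  have hc : (Tr φ F (m * k)).card ≤ s ^ k * (Tr ψ B (m * k)).card :=
    (Finset.card_le_card hsub).trans (Finset.card_mul_le.trans
      (Nat.mul_le_mul (hR.trans (Nat.pow_le_pow_left hSc k)) Finset.card_image_le))
  have hl : Real.log (Tr φ F (m * k)).card ≤ k * Real.log s + Real.log (Tr ψ B (m * k)).card := by
    rw [← Real.log_pow, ← Real.log_mul (pow_pos hs0 k).ne' hb0.ne']
    exact Real.log_le_log (card_Tr_pos φ hF _) (by exact_mod_cast hc)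
  have hm' : (0 : ℝ) < m := by exact_mod_cast hm
  have hk' : (0 : ℝ) < k := by exact_mod_cast hk
  simp only [Function.comp]
  have e : Real.log s / m = (k * Real.log s) / ((m * k : ℕ) : ℝ) := by
    push_cast; field_simp
  rw [e, ← add_div]
  gcongr

theorem Halg_ge [DecidableEq G] (H : Subgroup G) [DecidableEq (G ⧸ H)] (φ : G →* G) (ψ : H →* H)
    (hψ : ∀ x : H, (ψ x : G) = φ x) (χ : G ⧸ H →* G ⧸ H)
    (hχ : ∀ x : G, QuotientGroup.mk' H (φ x) = χ (QuotientGroup.mk' H x))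
    {A : Finset H} (hA : A.Nonempty) {C : Finset (G ⧸ H)} (hC : C.Nonempty) :
    ∃ F : Finset G, F.Nonempty ∧ Halg ψ A + Halg χ C ≤ Halg φ F := by
  have hC' : (C.image Quotient.out).image (QuotientGroup.mk' H) = C := by
    rw [Finset.image_image]
    have : (QuotientGroup.mk' H ∘ Quotient.out : G ⧸ H → G ⧸ H) = id :=
      funext fun q => QuotientGroup.out_eq' q
    rw [this, Finset.image_id]
  have hF : (A.image H.subtype * C.image Quotient.out).Nonempty := (hA.image _).mul (hC.image _)
  refine ⟨_, hF, ?_⟩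
  refine le_of_tendsto_of_tendsto' ((tendsto_Halg ψ hA).add (tendsto_Halg χ hC))
    (tendsto_Halg φ hF) fun n => ?_
  rw [← add_div, ← Real.log_mul (card_Tr_pos ψ hA n).ne' (card_Tr_pos χ hC n).ne']
  have h := card_mul_ge H (Tr ψ A n) (Tr φ (C.image Quotient.out) n)
  rw [image_Tr φ χ _ hχ, hC', image_Tr ψ φ H.subtype hψ, ← Tr_mul] at h
  gcongr
  · exact mul_pos (card_Tr_pos ψ hA n) (card_Tr_pos χ hC n)
  · exact_mod_cast h

end Helpers

/-- **Addition Theorem.** For an endomorphism `φ` of an abelian group `G`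
and a `φ`-invariant subgroup `H`, with `φ↾H` the restriction and `φ̄` the induced
endomorphism of `G/H`, one has `h_alg(φ) = h_alg(φ↾H) + h_alg(φ̄)` in `[0,∞]`. -/
theorem statement_14 {G : Type*} [CommGroup G] (φ : G →* G)
    (H : Subgroup G) (hH : H ≤ H.comap φ) :
    halg ⇑φ
      = halg (fun x : H => (⟨φ x, hH x.2⟩ : H))
        + halg ⇑(QuotientGroup.map H H φ hH) := by
  classical
  let ψ : H →* H := (φ.comp H.subtype).codRestrict H (fun x => hH x.2)
  have hψ : ∀ x : H, (ψ x : G) = φ x := fun _ => rfl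
  set χ := QuotientGroup.map H H φ hH with hχd
  have hχ : ∀ x : G, QuotientGroup.mk' H (φ x) = χ (QuotientGroup.mk' H x) := fun _ => rfl
  change halg ⇑φ = halg ⇑ψ + halg ⇑χ
  apply le_antisymm
  · refine iSup₂_le fun F hF => ?_
    have hF' := hF.image (QuotientGroup.mk' H)
    have t : Filter.Tendsto (fun m : ℕ => halg ⇑ψ + ENNReal.ofReal
        (Real.log (Tr χ (F.image (QuotientGroup.mk' H)) m).card / m)) Filter.atTop
        (nhds (halg ⇑ψ + ENNReal.ofReal (Halg χ (F.image (QuotientGroup.mk' H))))) :=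
      tendsto_const_nhds.add (ENNReal.tendsto_ofReal (tendsto_Halg χ hF'))
    have h1 : ENNReal.ofReal (Halg φ F) ≤
        halg ⇑ψ + ENNReal.ofReal (Halg χ (F.image (QuotientGroup.mk' H))) := by
      refine ge_of_tendsto t ?_
      filter_upwards [Filter.eventually_gt_atTop 0] with m hm
      obtain ⟨B, hB, hle⟩ := Halg_le H φ ψ hψ χ hχ hF hm
      refine (ENNReal.ofReal_le_ofReal hle).trans (ENNReal.ofReal_add_le.trans ?_)
      rw [add_comm]
      gcongr
      exact le_iSup₂_of_le (f := fun (F : Finset H) (_ : F.Nonempty) =>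
        ENNReal.ofReal (Halg ψ F)) B hB le_rfl
    refine h1.trans ?_
    gcongr
    exact le_iSup₂_of_le (f := fun (F : Finset (G ⧸ H)) (_ : F.Nonempty) =>
        ENNReal.ofReal (Halg χ F)) _ hF' le_rfl
  · refine ENNReal.biSup_add_biSup_le' (p := fun F : Finset H => F.Nonempty)
      (q := fun F : Finset (G ⧸ H) => F.Nonempty) ⟨1, Finset.one_nonempty⟩
      ⟨1, Finset.one_nonempty⟩ fun A hA C hC => ?_
    obtain ⟨F, hF, hle⟩ := Halg_ge H φ ψ hψ χ hχ hA hC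
    rw [← ENNReal.ofReal_add (Halg_nonneg ψ hA) (Halg_nonneg χ hC)]
    exact (ENNReal.ofReal_le_ofReal hle).trans
      (le_iSup₂_of_le (f := fun (F : Finset G) (_ : F.Nonempty) =>
        ENNReal.ofReal (Halg φ F)) F hF le_rfl)
end

section
/- (Dichotomy Theorem for growth) Let G be an abelian group, φ : G → G an endomorphism, and F a nonempty finite subset of G such that G is generated (as a group) by the trajectory ⋃_{n≥0} φ^n(F). Then the growth function γ_{φ,F}(n) = |T_n(φ,F)| is either polynomial or exponential: either there exist d ∈ ℕ and C > 0 such that γ_{φ,F}(n) ≤ C·n^d for all n ≥ 1, or there exist a real b > 1 and n_0 such that γ_{φ,F}(n) ≥ b^n for all n ≥ n_0. In particular, no finitely generated flow in the category of abelian groups has intermediate growth. -/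
open scoped Pointwise ENNReal

section Helpers

open Polynomial

def Tame {M : Type*} [AddCommGroup M] (φ : Module.End ℤ M) (f : M) : Prop :=
  ∃ (B : Finset M) (C D : ℕ), ∀ j : ℕ, ∃ z : M → ℤ,
    (φ ^ j) f = ∑ g ∈ B, z g • g ∧ ∀ g, |z g| ≤ (C : ℤ) * ((j : ℤ) + 1) ^ D

theorem tame_step {M : Type*} [AddCommGroup M] (φ : Module.End ℤ M) (f : M) (K : ℕ) (hK : 0 < K)
    (h : Tame φ ((φ ^ (K + 1) - φ) f)) : Tame φ f := by
  classical
  obtain ⟨B, C, D, h⟩ := h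
  refine ⟨B ∪ (Finset.range (K + 1)).image (fun j => (φ ^ j) f), C + 1, D + 1, ?_⟩
  intro j
  induction j using Nat.strong_induction_on with
  | _ j ih =>
  by_cases hj : j < K + 1
  · refine ⟨fun g => if g = (φ ^ j) f then 1 else 0, ?_, ?_⟩
    · simp only [ite_smul, one_smul, zero_smul]
      rw [Finset.sum_ite_eq' _ _ (fun g => g), if_pos]
      exact Finset.mem_union_right _ (Finset.mem_image_of_mem _ (Finset.mem_range.2 hj))
    · intro g
      have : (1 : ℤ) ≤ ((C + 1 : ℕ) : ℤ) * ((j : ℤ) + 1) ^ (D + 1) := by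
        have h1 : (1 : ℤ) ≤ ((j : ℤ) + 1) ^ (D + 1) := one_le_pow₀ (by omega)
        push_cast
        nlinarith
      dsimp only
      split_ifs
      · simpa using this
      · simp only [abs_zero]; omega
  · obtain ⟨i, rfl⟩ : ∃ i, j = i + (K + 1) := ⟨j - (K + 1), by omega⟩
    obtain ⟨z, hz, hb⟩ := ih (i + 1) (by omega)
    obtain ⟨z', hz', hb'⟩ := h i
    refine ⟨fun g => z g + if g ∈ B then z' g else 0, ?_, ?_⟩
    · have e : (φ ^ (i + (K + 1))) f = (φ ^ (i + 1)) f + (φ ^ i) ((φ ^ (K + 1) - φ) f) := by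
        simp [pow_add, LinearMap.sub_apply]
      rw [e, hz, hz']
      simp only [add_smul, Finset.sum_add_distrib, ite_smul, zero_smul]
      congr 1
      rw [← Finset.sum_filter]
      congr 1
      ext x; simp +contextual
    · intro g
      have h1 := hb g
      have h2 := hb' g
      have h3 : |z g + if g ∈ B then z' g else 0| ≤ |z g| + |z' g| := by
        refine (abs_add_le _ _).trans ?_
        refine add_le_add le_rfl ?_
        split_ifs
        · exact le_rfl
        · simp
      refine h3.trans ((add_le_add h1 h2).trans ?_)
      push_cast
      have h4 : ((i : ℤ) + 1) ^ D ≤ ((i : ℤ) + 1 + 1) ^ D := by gcongr; omega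
      have h5 : ((i : ℤ) + 1 + 1 + 1) ^ (D + 1) ≤ ((i : ℤ) + (K + 1) + 1) ^ (D + 1) := by
        gcongr ?_ ^ _; omega
      have h6 : ((i : ℤ) + 1 + 1) ^ D ≤ ((i : ℤ) + 1 + 1 + 1) ^ D := by gcongr; omega
      have h7 : ((i : ℤ) + 1 + 1) ^ (D + 1) + ((i : ℤ) + 1 + 1) ^ D
          ≤ ((i : ℤ) + 1 + 1 + 1) ^ (D + 1) := by
        rw [pow_succ, pow_succ]; nlinarith
      have h8 : (0 : ℤ) ≤ ((i : ℤ) + 1) ^ D := by positivity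
      have hC : (0 : ℤ) ≤ C := by positivity
      calc ((C : ℤ) + 1) * ((i : ℤ) + 1 + 1) ^ (D + 1) + C * ((i : ℤ) + 1) ^ D
          ≤ (C + 1) * (((i : ℤ) + 1 + 1) ^ (D + 1) + ((i : ℤ) + 1 + 1) ^ D) := by nlinarith
        _ ≤ (C + 1) * ((i : ℤ) + (K + 1) + 1) ^ (D + 1) := by
            gcongr; exact h7.trans h5

theorem tame_step_pow {M : Type*} [AddCommGroup M] (φ : Module.End ℤ M) (f : M) (K : ℕ)
    (hK : 0 < K) (b : ℕ)
    (h : Tame φ (((φ ^ (K + 1) - φ) ^ b) f)) : Tame φ f := by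
  induction b with
  | zero => simpa using h
  | succ b ih =>
    apply ih
    apply tame_step φ _ K hK
    rwa [pow_succ', Module.End.mul_apply] at h

theorem tame_torsion {M : Type*} [AddCommGroup M] (φ : Module.End ℤ M) (t : M) (c : ℤ) (hc : c ≠ 0)
    (ht : c • t = 0) (p : ℤ[X]) (hp : p.Monic) (hpt : aeval φ p t = 0) : Tame φ t := by
  classical
  refine ⟨(Finset.range p.natDegree).image (fun i => (φ ^ i) t), p.natDegree * c.natAbs, 0, ?_⟩
  intro j
  set r := (X ^ j : ℤ[X]) %ₘ p with hr
  have e1 : (φ ^ j) t = aeval φ r t := by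
    have := congrArg (fun q => aeval φ q t) (modByMonic_add_div (X ^ j : ℤ[X]) p)
    simp only [map_add, map_mul, LinearMap.add_apply, Module.End.mul_apply, map_pow, aeval_X] at this
    rw [← this, hr]
    have h2 : aeval φ p (aeval φ ((X ^ j : ℤ[X]) /ₘ p) t) = 0 := by
      rw [← Module.End.mul_apply, ← map_mul, mul_comm, map_mul, Module.End.mul_apply, hpt, map_zero]
    rw [h2, add_zero]
  have e2 : (φ ^ j) t = ∑ i ∈ Finset.range p.natDegree, (r.coeff i % c) • (φ ^ i) t := by
    rw [e1]
    by_cases hd : p.natDegree = 0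
    · have : p = 1 := hp.natDegree_eq_zero.mp hd
      subst this
      simp [hr]
    rw [aeval_eq_sum_range' (n := p.natDegree)
      (by apply natDegree_modByMonic_lt _ hp; rintro rfl; simp at hd)]
    rw [LinearMap.sum_apply]
    refine Finset.sum_congr rfl fun i _ => ?_
    rw [LinearMap.smul_apply]
    conv_lhs => rw [← Int.mul_ediv_add_emod (r.coeff i) c]
    rw [add_smul, mul_comm, mul_smul, ← map_zsmul, ht]
    simp
  refine ⟨fun g => ∑ i ∈ (Finset.range p.natDegree) with (φ ^ i) t = g, r.coeff i % c, ?_, ?_⟩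
  · rw [e2]
    simp only [Finset.sum_smul]
    rw [← Finset.sum_fiberwise_of_maps_to (g := fun i => (φ ^ i) t)
      (t := (Finset.range p.natDegree).image (fun i => (φ ^ i) t))
      (fun i hi => Finset.mem_image_of_mem _ hi)]
    refine Finset.sum_congr rfl fun g _ => Finset.sum_congr rfl fun i hi => ?_
    rw [(Finset.mem_filter.1 hi).2]
  · intro g
    refine (Finset.abs_sum_le_sum_abs _ _).trans ?_
    refine (Finset.sum_le_card_nsmul _ _ (c.natAbs : ℤ) ?_).trans ?_
    · intro i _
      rw [abs_of_nonneg (Int.emod_nonneg _ hc)]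
      have := Int.emod_lt_abs (r.coeff i) hc
      rw [Int.natCast_natAbs]
      exact this.le
    · have := Finset.card_filter_le (Finset.range p.natDegree) (fun i => (φ ^ i) t = g)
      rw [Finset.card_range] at this
      simp only [nsmul_eq_mul, pow_zero, mul_one]
      push_cast
      gcongr

theorem alg_part (I : Ideal ℤ[X]) (p : ℤ[X]) (hp : p.Monic) (hpI : p ∈ I)
    (hroot : ∀ l : ℂ, (∀ r ∈ I, aeval l r = 0) → ‖l‖ ≤ 1) :
    ∃ (K b : ℕ) (c : ℤ), 0 < K ∧ c ≠ 0 ∧ C c * (X ^ (K + 1) - X) ^ b ∈ I := by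
  classical
  -- roots of unity
  have kron : ∀ l : ℂ, (∀ r ∈ I, aeval l r = 0) → l ≠ 0 → ∃ n, 0 < n ∧ l ^ n = 1 := by
    intro z hz hz0
    have hzi : IsIntegral ℤ z := ⟨p, hp, by simpa [aeval_def] using hz p hpI⟩
    let K := IntermediateField.adjoin ℚ {z}
    let : NumberField K := {
      to_charZero := (IntermediateField.adjoin ℚ {z}).charZero,
      to_finiteDimensional := IntermediateField.adjoin.finiteDimensional hzi.tower_top }
    let y : K := ⟨z, IntermediateField.mem_adjoin_simple_self ℚ z⟩
    have hy : algebraMap K ℂ y = z := rfl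
    obtain ⟨n, hn, h⟩ : ∃ (n : ℕ) (_ : 0 < n), y ^ n = 1 := by
      refine NumberField.Embeddings.pow_eq_one_of_norm_le_one K ℂ ?_ ?_ ?_
      · intro h; apply hz0; rw [← hy, h, map_zero]
      · exact (isIntegral_algebraMap_iff (algebraMap K ℂ).injective).1 (hy ▸ hzi)
      · intro ψ
        apply hroot
        intro r hr
        have h0 : aeval y r = 0 := by
          apply (algebraMap K ℂ).injective
          rw [map_zero, ← hz r hr, ← hy, aeval_algebraMap_apply]
        have : aeval (ψ y) r = ψ (aeval y r) := by
          exact aeval_algHom_apply ψ.toIntAlgHom y r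
        rw [this, h0, map_zero]
    exact ⟨n, hn, by rw [← hy, ← map_pow, h, map_one]⟩
  let ι : ℤ[X] →+* ℚ[X] := mapRingHom (Int.castRingHom ℚ)
  let J : Ideal ℚ[X] := I.map ι
  obtain ⟨m, hm⟩ : ∃ m, J = Ideal.span {m} :=
    ⟨_, (Submodule.IsPrincipal.span_singleton_generator J).symm⟩
  have hmI : ∀ r ∈ I, m ∣ ι r := fun r hr => by
    rw [← Ideal.mem_span_singleton, ← hm]; exact Ideal.mem_map_of_mem _ hr
  have hm0 : m ≠ 0 := by
    rintro rfl
    have := hmI p hpI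
    rw [zero_dvd_iff] at this
    exact (hp.map (Int.castRingHom ℚ)).ne_zero this
  let mC : ℂ[X] := m.map (algebraMap ℚ ℂ)
  have hmC0 : mC ≠ 0 := by simpa [mC] using hm0
  have hcommon : ∀ l ∈ mC.roots, ∀ r ∈ I, aeval l r = 0 := by
    intro l hl r hr
    obtain ⟨q, hq⟩ := hmI r hr
    have h1 : aeval l m = 0 := by
      have := (mem_roots hmC0).1 hl
      rwa [IsRoot, eval_map_algebraMap] at this
    have h2 : aeval l (ι r) = aeval l r := by
      simp only [ι, coe_mapRingHom, ← algebraMap_int_eq, aeval_map_algebraMap]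
    rw [← h2, hq, map_mul, h1, zero_mul]
  have hN : ∀ l : ℂ, ∃ n : ℕ, 0 < n ∧ (l ∈ mC.roots → l ≠ 0 → l ^ n = 1) := by
    intro l
    by_cases h : l ∈ mC.roots ∧ l ≠ 0
    · obtain ⟨n, hn, h'⟩ := kron l (hcommon l h.1) h.2
      exact ⟨n, hn, fun _ _ => h'⟩
    · exact ⟨1, one_pos, fun h1 h2 => absurd ⟨h1, h2⟩ h⟩
  choose N hNpos hN using hN
  let K := ∏ l ∈ mC.roots.toFinset, N l
  have hK : 0 < K := Finset.prod_pos fun l _ => hNpos l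
  have hroots : ∀ l ∈ mC.roots, (X - C l : ℂ[X]) ∣ X ^ (K + 1) - X := by
    intro l hl
    rw [dvd_iff_isRoot]
    by_cases h0 : l = 0
    · simp [h0]
    · have h1 := hN l hl h0
      obtain ⟨d, hd⟩ : N l ∣ K := Finset.dvd_prod_of_mem _ (Multiset.mem_toFinset.2 hl)
      simp [pow_succ, hd, pow_mul, h1]
  have hdvdC : mC ∣ (X ^ (K + 1) - X) ^ (Multiset.card mC.roots) := by
    have h1 : (mC.roots.map fun a => X - C a).prod ∣
        (X ^ (K + 1) - X : ℂ[X]) ^ (Multiset.card mC.roots) := by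
      have h2 : ((mC.roots.map fun _ => (X ^ (K + 1) - X : ℂ[X]))).prod =
        (X ^ (K + 1) - X : ℂ[X]) ^ (Multiset.card mC.roots) := by simp
      rw [← h2]
      exact Multiset.prod_dvd_prod_of_dvd _ _ hroots
    have h3 := (IsAlgClosed.splits mC).eq_prod_roots
    rw [h3]
    have hu : IsUnit (C mC.leadingCoeff) := by
      rw [isUnit_C]; exact (leadingCoeff_ne_zero.2 hmC0).isUnit
    rw [hu.mul_left_dvd]
    rw [← h3]
    exact h1
  set b := Multiset.card mC.roots
  have hdvd : m ∣ (X ^ (K + 1) - X) ^ b := by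
    rw [← map_dvd_map' (algebraMap ℚ ℂ)]
    simpa [mC] using hdvdC
  have hJ : ι ((X ^ (K + 1) - X) ^ b) ∈ J := by
    rw [hm, Ideal.mem_span_singleton]
    simpa [ι] using hdvd
  have hden : ∀ x ∈ J, ∃ (c : ℤ) (q : ℤ[X]), c ≠ 0 ∧ q ∈ I ∧ C (c : ℚ) * x = ι q := by
    intro x hx
    refine Submodule.span_induction ?_ ?_ ?_ ?_ hx
    · rintro _ ⟨q, hq, rfl⟩
      exact ⟨1, q, one_ne_zero, hq, by simp⟩
    · exact ⟨1, 0, one_ne_zero, I.zero_mem, by simp⟩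
    · rintro x y _ _ ⟨c, q, hc, hq, h⟩ ⟨c', q', hc', hq', h'⟩
      refine ⟨c * c', C c' * q + C c * q', mul_ne_zero hc hc',
        I.add_mem (I.mul_mem_left _ hq) (I.mul_mem_left _ hq'), ?_⟩
      rw [map_add, map_mul, map_mul, ← h, ← h']
      simp [ι]
      ring
    · rintro a x _ ⟨c, q, hc, hq, h⟩
      obtain ⟨d, hd, hda⟩ := IsLocalization.integerNormalization_spec (nonZeroDivisors ℤ) a
      refine ⟨d * c, IsLocalization.integerNormalization (nonZeroDivisors ℤ) a * q,
        mul_ne_zero (nonZeroDivisors.ne_zero hd) hc, I.mul_mem_left _ hq, ?_⟩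
      rw [map_mul, ← h]
      have : ι (IsLocalization.integerNormalization (nonZeroDivisors ℤ) a) = C (d : ℚ) * a := by
        simp only [ι, coe_mapRingHom, ← algebraMap_int_eq, hda]
        rw [zsmul_eq_mul]; simp
      rw [this, smul_eq_mul]
      simp
      ring
  obtain ⟨c, q, hc, hq, h⟩ := hden _ hJ
  refine ⟨K, b, c, hK, hc, ?_⟩
  have : C c * (X ^ (K + 1) - X) ^ b = q := by
    apply map_injective (Int.castRingHom ℚ) Int.cast_injective
    change _ = ι q
    rw [← h]
    simp [ι]
  rwa [this]


theorem poly_of_collision {M : Type*} [AddCommGroup M] (φ : Module.End ℤ M) (f : M) (k : ℕ)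
    (S S' : Finset ℕ) (hne : S ≠ S')
    (h : ∑ i ∈ S, (φ ^ (k * i)) f = ∑ i ∈ S', (φ ^ (k * i)) f) :
    ∃ r : ℤ[X], r.Monic ∧ (∀ i, |r.coeff i| ≤ 1) ∧ aeval φ (expand ℤ k r) f = 0 := by
  classical
  have key : ∀ (S S' : Finset ℕ) (i₀ : ℕ), i₀ ∈ S → i₀ ∉ S' → (∀ i, i₀ < i → (i ∈ S ↔ i ∈ S')) →
      (∑ i ∈ S, (φ ^ (k * i)) f = ∑ i ∈ S', (φ ^ (k * i)) f) →
      ∃ r : ℤ[X], r.Monic ∧ (∀ i, |r.coeff i| ≤ 1) ∧ aeval φ (expand ℤ k r) f = 0 := by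
    intro S S' i₀ h1 h2 h3 h
    have hco : ∀ i, (∑ i ∈ S, (X : ℤ[X]) ^ i - ∑ i ∈ S', X ^ i).coeff i =
        (if i ∈ S then 1 else 0) - (if i ∈ S' then 1 else 0) := by
      intro i
      simp [coeff_sub, coeff_X_pow]
    refine ⟨∑ i ∈ S, X ^ i - ∑ i ∈ S', X ^ i, ?_, ?_, ?_⟩
    · apply monic_of_natDegree_le_of_coeff_eq_one i₀
      · rw [natDegree_le_iff_coeff_eq_zero]
        intro i hi
        rw [hco, sub_eq_zero]
        simp only [h3 i hi]
      · rw [hco, if_pos h1, if_neg h2, sub_zero]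
    · intro i
      rw [hco]
      split_ifs <;> simp
    · simp only [map_sub, map_sum, map_pow, expand_X, aeval_X, LinearMap.sub_apply,
        LinearMap.sum_apply, ← pow_mul]
      rw [h, sub_self]
  have hD : (symmDiff S S').Nonempty := by
    rw [Finset.nonempty_iff_ne_empty, ← Finset.bot_eq_empty, Ne, symmDiff_eq_bot]
    exact hne
  set i₀ := (symmDiff S S').max' hD
  have hi : i₀ ∈ symmDiff S S' := Finset.max'_mem _ _
  have hmax : ∀ i, i₀ < i → (i ∈ S ↔ i ∈ S') := by
    intro i hlt
    by_contra hcon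
    have : i ∈ symmDiff S S' := by
      rw [Finset.mem_symmDiff]; tauto
    exact absurd (Finset.le_max' _ _ this) (not_le.2 hlt)
  rw [Finset.mem_symmDiff] at hi
  rcases hi with ⟨h1, h2⟩ | ⟨h1, h2⟩
  · exact key S S' i₀ h1 h2 hmax h
  · exact key S' S i₀ h1 h2 (fun i hi => (hmax i hi).symm) h.symm

theorem root_bound (r : ℤ[X]) (hr : r.Monic) (hc : ∀ i, |r.coeff i| ≤ 1) (z : ℂ)
    (hz : aeval z r = 0) : ‖z‖ < 2 := by
  have hm : (r.map (Int.castRingHom ℂ)).Monic := hr.map _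
  have h1 : (r.map (Int.castRingHom ℂ)).IsRoot z := by
    rw [IsRoot, eval_map, ← algebraMap_int_eq, ← aeval_def, hz]
  have h2 := h1.norm_lt_cauchyBound hm.ne_zero
  have h3 : cauchyBound (r.map (Int.castRingHom ℂ)) ≤ 2 := by
    rw [cauchyBound, hm.leadingCoeff]
    simp only [nnnorm_one, div_one]
    rw [← one_add_one_eq_two]
    gcongr
    apply Finset.sup_le
    intro i _
    rw [coeff_map, ← NNReal.coe_le_coe, coe_nnnorm]
    simp only [eq_intCast, Complex.norm_intCast, NNReal.coe_one]
    exact_mod_cast hc i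
  have h4 : ‖z‖₊ < 2 := h2.trans_le h3
  exact_mod_cast h4

theorem tame_of_collisions {M : Type*} [AddCommGroup M] (φ : Module.End ℤ M) (f : M)
    (H : ∀ k : ℕ, 0 < k → ∃ S S' : Finset ℕ, S ≠ S' ∧
      ∑ i ∈ S, (φ ^ (k * i)) f = ∑ i ∈ S', (φ ^ (k * i)) f) : Tame φ f := by
  have H' : ∀ k : ℕ, 0 < k →
      ∃ r : ℤ[X], r.Monic ∧ (∀ i, |r.coeff i| ≤ 1) ∧ aeval φ (expand ℤ k r) f = 0 := by
    intro k hk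
    obtain ⟨S, S', h1, h2⟩ := H k hk
    exact poly_of_collision φ f k S S' h1 h2
  let I : Ideal ℤ[X] :=
    { carrier := {p | aeval φ p f = 0}
      add_mem' := by
        intro a b ha hb
        simp only [Set.mem_ofPred_eq] at *
        rw [map_add, LinearMap.add_apply, ha, hb, add_zero]
      zero_mem' := by simp
      smul_mem' := by
        intro a b hb
        simp only [Set.mem_ofPred_eq] at *
        rw [smul_eq_mul, map_mul, Module.End.mul_apply, hb, map_zero] }
  have hI : ∀ p, p ∈ I ↔ aeval φ p f = 0 := fun p => Iff.rfl
  obtain ⟨p, hp, -, hpf⟩ := H' 1 one_pos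
  rw [expand_one] at hpf
  obtain ⟨K, b, c, hK, hc, hP⟩ := alg_part I p hp hpf (by
    intro l hl
    by_contra hcon
    rw [not_le] at hcon
    obtain ⟨n, hn⟩ := pow_unbounded_of_one_lt (2 : ℝ) hcon
    have hn0 : 0 < n := by
      rcases Nat.eq_zero_or_pos n with rfl | h
      · norm_num at hn
      · exact h
    obtain ⟨r, hr, hrc, hrf⟩ := H' n hn0
    have h1 := hl _ hrf
    rw [expand_aeval] at h1
    have := root_bound r hr hrc _ h1
    rw [norm_pow] at this
    linarith)
  rw [hI] at hP
  apply tame_step_pow φ f K hK b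
  apply tame_torsion φ _ c hc _ p hp
  · have : (φ ^ (K + 1) - φ) ^ b = aeval φ ((X ^ (K + 1) - X : ℤ[X]) ^ b) := by simp
    rw [this, ← Module.End.mul_apply, ← map_mul, mul_comm, map_mul, Module.End.mul_apply, hpf,
      map_zero]
  · have : (φ ^ (K + 1) - φ) ^ b = aeval φ ((X ^ (K + 1) - X : ℤ[X]) ^ b) := by simp
    rw [this, ← hP, map_mul, Module.End.mul_apply, aeval_C]
    simp

theorem card_of_tame {M : Type*} [AddCommGroup M] [DecidableEq M] (φ : Module.End ℤ M) (f : M)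
    (h : Tame φ f) : ∃ d C : ℕ, 0 < C ∧ ∀ n : ℕ,
      ((Finset.range (n + 1)).powerset.image (fun S => ∑ j ∈ S, (φ ^ j) f)).card
        ≤ C * (n + 1) ^ d := by
  obtain ⟨B, C, D, h⟩ := h
  choose z hz hb using h
  refine ⟨(D + 1) * B.card, (2 * C + 1) ^ B.card, by positivity, fun n => ?_⟩
  set L : ℕ := C * (n + 1) ^ (D + 1) with hL
  have hsub : (Finset.range (n + 1)).powerset.image (fun S => ∑ j ∈ S, (φ ^ j) f) ⊆
      (Fintype.piFinset (fun _ : B => Finset.Icc (-(L : ℤ)) L)).image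
        (fun w => ∑ g : B, w g • (g : M)) := by
    intro x hx
    obtain ⟨S, hS, rfl⟩ := Finset.mem_image.1 hx
    rw [Finset.mem_powerset] at hS
    refine Finset.mem_image.2 ⟨fun g => ∑ j ∈ S, z j g, ?_, ?_⟩
    · rw [Fintype.mem_piFinset]
      intro g
      rw [Finset.mem_Icc, ← abs_le]
      refine (Finset.abs_sum_le_sum_abs _ _).trans ?_
      refine (Finset.sum_le_card_nsmul _ _ ((C : ℤ) * ((n : ℤ) + 1) ^ D) ?_).trans ?_
      · intro j hj
        have hjn := Finset.mem_range.1 (hS hj)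
        refine (hb j g).trans ?_
        gcongr
        omega
      · have := Finset.card_le_card hS
        rw [Finset.card_range] at this
        have h2 : S.card * (C * (n + 1) ^ D) ≤ L := by
          calc S.card * (C * (n + 1) ^ D) ≤ (n + 1) * (C * (n + 1) ^ D) := by gcongr
            _ = L := by rw [hL]; ring
        rw [nsmul_eq_mul]
        exact_mod_cast h2
    · simp only [Finset.sum_smul]
      rw [Finset.sum_comm]
      refine Finset.sum_congr rfl fun j _ => ?_
      rw [hz j, ← Finset.sum_coe_sort B]
  refine (Finset.card_le_card hsub).trans (Finset.card_image_le.trans ?_)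
  rw [Fintype.card_piFinset]
  simp only [Int.card_Icc, Finset.prod_const, Finset.card_univ, Fintype.card_coe]
  rw [pow_mul, ← mul_pow]
  gcongr
  have : ((L : ℤ) + 1 - -(L : ℤ)).toNat = 2 * L + 1 := by omega
  rw [this, hL]
  have : 1 ≤ (n + 1) ^ (D + 1) := Nat.one_le_pow _ _ (by omega)
  nlinarith

theorem mem_Tn_iff {G : Type*} [CommGroup G] (φ : G → G) (F : Finset G) (hF : F.Nonempty) (n : ℕ)
    (x : G) : x ∈ Tn φ F n ↔
      ∃ c : ℕ → G, (∀ j, c j ∈ F) ∧ ∏ j ∈ Finset.range (n + 1), φ^[j] (c j) = x := by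
  classical
  induction n generalizing x with
  | zero =>
    simp only [Tn, zero_add, Finset.range_one, Finset.prod_singleton, Function.iterate_zero, id]
    exact ⟨fun h => ⟨fun _ => x, fun _ => h, rfl⟩, fun ⟨c, h, e⟩ => e ▸ h 0⟩
  | succ n ih =>
    rw [Tn]
    constructor
    · intro h
      obtain ⟨a, ha, b, hb, rfl⟩ := Finset.mem_mul.1 h
      obtain ⟨c, hc, rfl⟩ := (ih a).1 ha
      obtain ⟨u, hu, rfl⟩ := Finset.mem_image.1 hb
      refine ⟨fun j => if j = n + 1 then u else c j, ?_, ?_⟩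
      · intro j; dsimp only; split_ifs
        · exact hu
        · exact hc j
      · rw [Finset.prod_range_succ]
        congr 1
        · refine Finset.prod_congr rfl fun j hj => ?_
          dsimp only
          rw [if_neg]
          have := Finset.mem_range.1 hj
          omega
        · simp
    · rintro ⟨c, hc, rfl⟩
      rw [Finset.prod_range_succ]
      exact Finset.mem_mul.2 ⟨_, (ih _).2 ⟨c, hc, rfl⟩, _, Finset.mem_image_of_mem _ (hc _), rfl⟩

end Helpers

/-- **Dichotomy Theorem for growth.** Let `G` be an abelian group,
`φ : G → G` an endomorphism, and `F` a nonempty finite subset of `G` generating `G` as a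
group together with all its forward images `φⁿ(F)`. Then the growth function
`γ_{φ,F}(n) = |T_n(φ,F)|` is either polynomial or exponential; there is no intermediate
growth. -/
theorem statement_17 {G : Type*} [CommGroup G] (φ : G → G)
    (hφ : ∀ x y : G, φ (x * y) = φ x * φ y)
    (F : Finset G) (hF : F.Nonempty)
    (hgen : Subgroup.closure (⋃ k : ℕ, φ^[k] '' (F : Set G)) = ⊤) :
    (∃ d : ℕ, ∃ C : ℝ, 0 < C ∧
        ∀ n : ℕ, ((Tn φ F n).card : ℝ) ≤ C * ((n : ℝ) + 1) ^ d)
    ∨ (∃ b : ℝ, 1 < b ∧ ∃ n₀ : ℕ, ∀ n : ℕ, n₀ ≤ n →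
        b ^ (n + 1) ≤ ((Tn φ F n).card : ℝ)) := by
  classical
  let Φ : Module.End ℤ (Additive G) :=
    (MonoidHom.toAdditive (MonoidHom.mk' φ hφ)).toIntLinearMap
  have hΦ : ∀ (j : ℕ) (x : G), (Φ ^ j) (Additive.ofMul x) = Additive.ofMul (φ^[j] x) := by
    intro j x
    induction j with
    | zero => simp
    | succ j ih =>
      rw [pow_succ', Module.End.mul_apply, ih, Function.iterate_succ_apply']
      rfl
  have hTn : ∀ (n : ℕ) (x : Additive G), x.toMul ∈ Tn φ F n ↔ ∃ c : ℕ → G, (∀ j, c j ∈ F) ∧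
      ∑ j ∈ Finset.range (n + 1), (Φ ^ j) (Additive.ofMul (c j)) = x := by
    intro n x
    rw [mem_Tn_iff φ F hF]
    simp only [hΦ, ← ofMul_prod]
    rfl
  obtain ⟨v, hv⟩ := hF
  let f : G → Additive G := fun u => Additive.ofMul u - Additive.ofMul v
  have hsplit : ∀ u j, (Φ ^ j) (Additive.ofMul u) =
      (Φ ^ j) (Additive.ofMul v) + (Φ ^ j) (f u) := by
    intro u j
    rw [← map_add]; simp [f]
  by_cases H : ∀ u ∈ F, ∀ k : ℕ, 0 < k → ∃ S S' : Finset ℕ, S ≠ S' ∧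
      ∑ i ∈ S, (Φ ^ (k * i)) (f u) = ∑ i ∈ S', (Φ ^ (k * i)) (f u)
  · left
    have hcard : ∀ u : F, ∃ d C : ℕ, 0 < C ∧ ∀ n : ℕ,
        ((Finset.range (n + 1)).powerset.image (fun S => ∑ j ∈ S, (Φ ^ j) (f u))).card
        ≤ C * (n + 1) ^ d := fun u => card_of_tame Φ _ (tame_of_collisions Φ _ (H u u.2))
    choose d C hC hE using hcard
    refine ⟨∑ u, d u, ((∏ u, C u : ℕ) : ℝ), ?_, fun n => ?_⟩
    · exact_mod_cast Finset.prod_pos fun u _ => hC u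
    have hsub : Tn φ F n ⊆ (Fintype.piFinset (fun u : F =>
        (Finset.range (n + 1)).powerset.image (fun S => ∑ j ∈ S, (Φ ^ j) (f u)))).image
        (fun w => Additive.toMul
          (∑ j ∈ Finset.range (n + 1), (Φ ^ j) (Additive.ofMul v) + ∑ u, w u)) := by
      intro x hx
      obtain ⟨c, hc, e⟩ := (hTn n (Additive.ofMul x)).1 hx
      refine Finset.mem_image.2
        ⟨fun u => ∑ j ∈ Finset.range (n + 1) with c j = u, (Φ ^ j) (f u), ?_, ?_⟩
      · rw [Fintype.mem_piFinset]
        intro u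
        exact Finset.mem_image_of_mem _ (Finset.mem_powerset.2 (Finset.filter_subset _ _))
      · apply Additive.ofMul.injective
        rw [← e, ofMul_toMul]
        rw [Finset.sum_congr rfl fun j _ => hsplit (c j) j, Finset.sum_add_distrib]
        congr 1
        rw [← Finset.sum_fiberwise (Finset.range (n + 1)) (fun j => (⟨c j, hc j⟩ : F))]
        refine Finset.sum_congr rfl fun u _ => ?_
        refine Finset.sum_congr ?_ ?_
        · ext j; simp [Subtype.ext_iff]
        · intro j hj
          have := (Finset.mem_filter.1 hj).2
          rw [← this]
    have h1 : (Tn φ F n).card ≤ (∏ u, C u) * (n + 1) ^ (∑ u, d u) := by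
      refine (Finset.card_le_card hsub).trans (Finset.card_image_le.trans ?_)
      rw [Fintype.card_piFinset, ← Finset.prod_pow_eq_pow_sum, ← Finset.prod_mul_distrib]
      exact Finset.prod_le_prod' fun u _ => hE u n
    exact_mod_cast h1
  · right
    push Not at H
    obtain ⟨u, hu, k, hk, H⟩ := H
    have hinj : ∀ S S' : Finset ℕ,
        ∑ i ∈ S, (Φ ^ (k * i)) (f u) = ∑ i ∈ S', (Φ ^ (k * i)) (f u) → S = S' := by
      intro S S' h
      by_contra hne
      exact H S S' hne h
    have hcard : ∀ n, 2 ^ (n / k + 1) ≤ (Tn φ F n).card := by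
      intro n
      have : (2 : ℕ) ^ (n / k + 1) = (Finset.range (n / k + 1)).powerset.card := by simp
      rw [this]
      refine Finset.card_le_card_of_injOn (fun S => Additive.toMul
        (∑ j ∈ Finset.range (n + 1), (Φ ^ j) (Additive.ofMul v) +
          ∑ i ∈ S, (Φ ^ (k * i)) (f u))) ?_ ?_
      · intro S hS
        have hS : S ⊆ Finset.range (n / k + 1) := Finset.mem_powerset.1 (Finset.mem_coe.1 hS)
        refine (hTn n _).2 ⟨fun j => if j ∈ S.image (k * ·) then u else v, ?_, ?_⟩
        · intro j; dsimp only; split_ifs <;> assumption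
        · have h1 : ∀ j, (Φ ^ j) (Additive.ofMul (if j ∈ S.image (k * ·) then u else v)) =
              (Φ ^ j) (Additive.ofMul v) + if j ∈ S.image (k * ·) then (Φ ^ j) (f u) else 0 := by
            intro j
            split_ifs
            · exact hsplit u j
            · simp
          rw [Finset.sum_congr rfl fun j _ => h1 j, Finset.sum_add_distrib]
          congr 1
          rw [Finset.sum_ite_mem, Finset.inter_eq_right.2, Finset.sum_image]
          · intro a _ b _ hab
            exact Nat.eq_of_mul_eq_mul_left hk hab
          · intro j hj
            obtain ⟨i, hi, rfl⟩ := Finset.mem_image.1 hj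
            have := Finset.mem_range.1 (hS hi)
            rw [Finset.mem_range, Nat.lt_succ_iff]
            calc k * i ≤ k * (n / k) := by gcongr; omega
              _ ≤ n := Nat.mul_div_le n k
      · intro S _ S' _ h
        have h' := Additive.toMul.injective h
        exact hinj S S' (add_left_cancel h')
    refine ⟨(2 : ℝ) ^ (1 / (k : ℝ)), ?_, 0, fun n _ => ?_⟩
    · exact Real.one_lt_rpow one_lt_two (by positivity)
    · rw [← Real.rpow_natCast, ← Real.rpow_mul (by norm_num)]
      have h2 : (2 : ℝ) ^ (1 / (k : ℝ) * ((n + 1 : ℕ) : ℝ)) ≤ (2 : ℝ) ^ ((n / k + 1 : ℕ) : ℝ) := by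
        apply Real.rpow_le_rpow_of_exponent_le one_le_two
        have hlt : n + 1 ≤ k * (n / k + 1) := Nat.lt_mul_div_succ n hk
        have hlt' : ((n + 1 : ℕ) : ℝ) ≤ (k : ℝ) * ((n / k + 1 : ℕ) : ℝ) := by exact_mod_cast hlt
        rw [one_div, inv_mul_le_iff₀ (by exact_mod_cast hk)]
        exact hlt'
      refine h2.trans ?_
      rw [Real.rpow_natCast]
      exact_mod_cast hcard n
end

section
/- (Dichotomy Theorem for the adjoint algebraic entropy) Let G be an abelian group and φ : G → G an endomorphism. Then either ent*(φ) = 0 or ent*(φ) = ∞; no finite positive value is attained. -/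
open scoped ENNReal

/-- The `n`-th cotrajectory of a subgroup `N` under `φ`
(`Cn φ N n = C_{n+1}(φ,N) = N ∩ φ⁻¹(N) ∩ … ∩ φ⁻ⁿ(N)`). -/
def Cn {G : Type*} [Group G] (φ : G →* G) (N : Subgroup G) : ℕ → Subgroup G
  | 0 => N
  | n + 1 => N ⊓ Subgroup.comap φ (Cn φ N n)

/-- `H*(φ,N) = lim_n (log [G : C_n(φ,N)])/n` (the limit exists, and equals the
`limsup`). -/
noncomputable def Hstar {G : Type*} [Group G] (φ : G →* G) (N : Subgroup G) : ℝ :=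
  Filter.limsup
    (fun n : ℕ => Real.log ((Cn φ N n).index : ℝ) / ((n : ℝ) + 1)) Filter.atTop

/-- The adjoint algebraic entropy
`ent*(φ) = sup {H*(φ,N) : N a finite-index subgroup of G} ∈ [0,∞]`. -/
noncomputable def entStar {G : Type*} [Group G] (φ : G →* G) : ℝ≥0∞ :=
  ⨆ N : Subgroup G, ⨆ _ : N.FiniteIndex, ENNReal.ofReal (Hstar φ N)

open Polynomial in
/-- Selection of a functional nonvanishing on countably many infinite-dimensional subspaces. -/
theorem aux_functional {K U : Type*} [Field K] [AddCommGroup U] [Module K U]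
    (R : ℕ → Submodule K U) (hR : ∀ n, ¬ FiniteDimensional K (R n)) :
    ∃ F : U →ₗ[K] K, ∀ n, ∃ w ∈ R n, F w ≠ 0 := by
  classical
  have key : ∀ (n : ℕ) (s : Finset U), ∃ y ∈ R n, y ∉ Submodule.span K (s : Set U) := by
    intro n s
    by_contra! hcon
    apply hR n
    have hle : R n ≤ Submodule.span K (s : Set U) := hcon
    have : FiniteDimensional K (Submodule.span K (s : Set U)) :=
      FiniteDimensional.span_finset K s
    exact Submodule.finiteDimensional_of_le hle
  choose g hgR hgs using key
  obtain ⟨S, hS0, hS⟩ : ∃ S : ℕ → Finset U, S 0 = ∅ ∧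
      ∀ n, S (n + 1) = insert (g n (S n)) (S n) :=
    ⟨fun n => Nat.rec ∅ (fun n s => insert (g n s) s) n, rfl, fun n => rfl⟩
  let S2 : ℕ → Set U := fun n => (S n : Set U)
  have hmono : Monotone S2 := by
    apply monotone_nat_of_le_succ
    intro n
    simp only [S2, hS, Finset.coe_insert]
    exact Set.subset_insert _ _
  have hli : ∀ n, LinearIndepOn K id (S n : Set U) := by
    intro n
    induction n with
    | zero => simp [hS0]
    | succ n ih =>
      rw [hS, Finset.coe_insert]
      exact ih.id_insert (hgs n _)
  have hU : LinearIndepOn K id (⋃ n, (S n : Set U)) :=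
    linearIndepOn_iUnion_of_directed hmono.directed_le hli
  let b := Module.Basis.extend hU
  refine ⟨b.constr ℕ (fun _ => (1 : K)), fun n => ⟨g n (S n), hgR n _, ?_⟩⟩
  have hm : g n (S n) ∈ hU.extend (Set.subset_univ _) := by
    apply hU.subset_extend
    refine Set.mem_iUnion.2 ⟨n + 1, ?_⟩
    rw [hS]; simp
  have hb : b ⟨_, hm⟩ = g n (S n) := Module.Basis.extend_apply_self hU _
  rw [← hb, Module.Basis.constr_basis]
  exact one_ne_zero

open Polynomial in
theorem aux_infinite {K V : Type*} [Field K] [AddCommGroup V] [Module K V]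
    (ψ : Module.End K V) (h : ∀ q : K[X], q ≠ 0 → aeval ψ q ≠ 0) (q : K[X]) (hq : q ≠ 0) :
    ¬ FiniteDimensional K (LinearMap.range (aeval ψ q)) := by
  intro hfin
  set W := LinearMap.range (aeval ψ q) with hW
  have hinv : ∀ x ∈ W, ψ x ∈ W := by
    rintro _ ⟨v, rfl⟩
    refine ⟨ψ v, ?_⟩
    have := congrArg (fun T : Module.End K V => T v) (show aeval ψ (q * X) = aeval ψ (X * q) by
      rw [mul_comm])
    simpa using this
  let ρ : Module.End K W := ψ.restrict hinv
  have hρ : ∀ r : K[X], ∀ x : W, ((aeval ρ r x : W) : V) = aeval ψ r (x : V) := by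
    intro r
    induction r using Polynomial.induction_on' with
    | add a b ha hb => intro x; simp [ha, hb]
    | monomial n a =>
      intro x
      have : ∀ n : ℕ, (((ρ ^ n) x : W) : V) = (ψ ^ n) (x : V) := by
        intro n
        induction n with
        | zero => simp
        | succ n ih => rw [pow_succ', pow_succ', Module.End.mul_apply, Module.End.mul_apply, ← ih]; rfl
      simp [aeval_monomial, this, Module.algebraMap_end_apply]
  have hint : IsIntegral K ρ := Algebra.IsIntegral.isIntegral ρ
  have hne : minpoly K ρ ≠ 0 := minpoly.ne_zero hint
  apply h (minpoly K ρ * q) (mul_ne_zero hne hq)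
  ext v
  have h1 := hρ (minpoly K ρ) ⟨aeval ψ q v, v, rfl⟩
  rw [minpoly.aeval] at h1
  simpa using h1.symm

open Polynomial in
/-- `k` functionals whose iterates are jointly independent. -/
theorem aux_indep {K V : Type*} [Field K] [Finite K] [AddCommGroup V] [Module K V]
    (ψ : Module.End K V) (h : ∀ q : K[X], q ≠ 0 → aeval ψ q ≠ 0) (k : ℕ) :
    ∃ f : Fin k → V →ₗ[K] K, ∀ n : ℕ,
      Function.Surjective (fun (v : V) (ij : Fin (n + 1) × Fin k) => f ij.2 ((ψ ^ (ij.1 : ℕ)) v)) := by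
  classical
  rcases Nat.eq_zero_or_pos k with rfl | hk
  · exact ⟨fun _ => 0, fun n y => ⟨0, by ext ij; exact ij.2.elim0⟩⟩
  let T : Type _ := {q : Fin k → K[X] // q ≠ 0}
  have : Countable K[X] := by
    have hc2 : Function.Injective (fun (q : K[X]) => (Finsupp.onFinset q.support q.coeff
        (fun n hn => mem_support_iff.2 hn) : ℕ →₀ K)) :=
      fun a b hab => Polynomial.ext fun n => DFunLike.congr_fun hab n
    exact hc2.countable
  have : Countable T := inferInstance
  have : Nonempty T := ⟨fun _ => 1, fun hh => one_ne_zero (congrFun hh ⟨0, hk⟩)⟩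
  obtain ⟨e, he⟩ := exists_surjective_nat T
  let w : (Fin k → K[X]) → V →ₗ[K] (Fin k → V) := fun q => LinearMap.pi fun j => aeval ψ (q j)
  obtain ⟨F, hF⟩ := aux_functional (fun n => LinearMap.range (w (e n).1)) (by
    intro n hfin
    obtain ⟨j, hj⟩ : ∃ j, (e n).1 j ≠ 0 := by
      by_contra! hh
      exact (e n).2 (funext hh)
    apply aux_infinite ψ h _ hj
    have : LinearMap.range (aeval ψ ((e n).1 j)) =
        (LinearMap.range (w (e n).1)).map (LinearMap.proj j) := by
      rw [← LinearMap.range_comp]; rfl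
    rw [this]
    infer_instance)
  refine ⟨fun j => F ∘ₗ LinearMap.single K (fun _ => V) j, fun n => ?_⟩
  let L : V →ₗ[K] (Fin (n + 1) × Fin k → K) := LinearMap.pi fun ij =>
    (F ∘ₗ LinearMap.single K (fun _ => V) ij.2) ∘ₗ (ψ ^ (ij.1 : ℕ))
  suffices hL : LinearMap.range L = ⊤ from LinearMap.range_eq_top.1 hL
  by_contra hne
  obtain ⟨Λ, hΛ, hker⟩ := Submodule.exists_le_ker_of_lt_top _ (lt_top_iff_ne_top.2 hne)
  let c : Fin (n + 1) × Fin k → K := fun ij => Λ (Pi.single ij 1)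
  have hΛc : ∀ y, Λ y = ∑ ij, y ij * c ij := by
    intro y
    conv_lhs => rw [pi_eq_sum_univ' y]
    simp [c, map_sum, map_smul]
  let q : Fin k → K[X] := fun j => ∑ i : Fin (n + 1), monomial (i : ℕ) (c (i, j))
  have hq : q ≠ 0 := by
    intro hq0
    apply hΛ
    have hc0 : ∀ ij, c ij = 0 := by
      rintro ⟨i, j⟩
      have h1 := congrArg (fun r : K[X] => r.coeff (i : ℕ)) (congrFun hq0 j)
      simpa [q, finsetSum_coeff, coeff_monomial, Fin.val_inj] using h1
    refine LinearMap.ext fun y => ?_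
    rw [hΛc]
    simp [hc0]
  obtain ⟨m, hm⟩ := he ⟨q, hq⟩
  obtain ⟨_, ⟨v, rfl⟩, hv⟩ := hF m
  apply hv
  rw [hm]
  have h0 : Λ (L v) = 0 := hker ⟨v, rfl⟩
  have hw : w q v = ∑ j, LinearMap.single K (fun _ => V) j (aeval ψ (q j) v) := by
    ext j
    simp [w]
  rw [hΛc, Fintype.sum_prod_type, Finset.sum_comm] at h0
  rw [hw, map_sum, ← h0]
  refine Finset.sum_congr rfl fun j _ => ?_
  simp only [q, map_sum, LinearMap.sum_apply, aeval_monomial, Module.End.mul_apply,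
    Module.algebraMap_end_apply, map_smul, L, LinearMap.pi_apply, LinearMap.comp_apply, smul_eq_mul]
  refine Finset.sum_congr rfl fun i _ => mul_comm _ _

open Polynomial in
theorem aux_quot.{u} {A : Type u} [AddCommGroup A] (Φ : A →ₗ[ℤ] A) (p : ℕ) :
    ∃ (V : Type u) (_ : AddCommGroup V) (_ : Module (ZMod p) V) (π : A →+ V) (ψ : Module.End (ZMod p) V),
      Function.Surjective π ∧ (∀ x, π x = 0 → ∃ y, x = p • y) ∧ ∀ x, π (Φ x) = ψ (π x) := by
  refine ⟨ModN A p, inferInstance, inferInstance, ModN.mkQ p, AddMonoidHom.toZModLinearMap p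
    (Submodule.mapQ _ _ Φ ?_ : ModN A p →ₗ[ℤ] ModN A p).toAddMonoidHom, ?_, ?_, ?_⟩
  · rintro _ ⟨y, rfl⟩
    exact ⟨Φ y, by simp⟩
  · exact Submodule.mkQ_surjective _
  · intro x hx
    obtain ⟨y, hy⟩ := (Submodule.Quotient.mk_eq_zero _).1 hx
    exact ⟨y, by simpa using hy.symm⟩
  · intro x; rfl

theorem aux_mem {G : Type*} [Group G] (φ : G →* G) (N : Subgroup G) (n : ℕ) (x : G) :
    x ∈ Cn φ N n ↔ ∀ i ≤ n, φ^[i] x ∈ N := by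
  induction n generalizing x with
  | zero => simp [Cn]
  | succ n ih =>
    simp only [Cn, Subgroup.mem_inf, Subgroup.mem_comap, ih]
    constructor
    · rintro ⟨h0, h1⟩ i hi
      rcases i with _ | i
      · simpa using h0
      · rw [Function.iterate_succ_apply]; exact h1 i (by omega)
    · intro h
      refine ⟨by simpa using h 0 (by omega), fun i hi => ?_⟩
      have := h (i + 1) (by omega)
      rwa [Function.iterate_succ_apply] at this

open Polynomial in
theorem aux_monic {A : Type*} [AddCommGroup A] (Φ : Module.End ℤ A)
    (h : ∀ p : ℕ, p.Prime → ∃ Q : ℤ[X], Q.Monic ∧ ∀ x, ∃ y, aeval Φ Q x = p • y) (m : ℕ)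
    (hm : m ≠ 0) : ∃ Q : ℤ[X], Q.Monic ∧ ∀ x, ∃ y, aeval Φ Q x = m • y := by
  induction m using induction_on_primes with
  | zero => exact absurd rfl hm
  | one => exact ⟨1, monic_one, fun x => ⟨x, by simp⟩⟩
  | prime_mul p a hp ih =>
    obtain ⟨Q, hQ, hQ'⟩ := ih (by rintro rfl; simp at hm)
    obtain ⟨P, hP, hP'⟩ := h p hp
    refine ⟨Q * P, hQ.mul hP, fun x => ?_⟩
    obtain ⟨y, hy⟩ := hP' x
    obtain ⟨z, hz⟩ := hQ' y
    exact ⟨z, by rw [map_mul, Module.End.mul_apply, hy, map_nsmul, hz, mul_smul]⟩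

open Polynomial in
theorem aux_zero {G : Type*} [CommGroup G] (φ : G →* G) (N : Subgroup G) [N.FiniteIndex]
    (h : ∀ m : ℕ, m ≠ 0 → ∃ Q : ℤ[X], Q.Monic ∧ ∀ x, ∃ y,
      aeval (φ.toAdditive.toIntLinearMap : Module.End ℤ (Additive G)) Q x = m • y) :
    Hstar φ N = 0 := by
  set Φ : Module.End ℤ (Additive G) := φ.toAdditive.toIntLinearMap with hΦ
  obtain ⟨Q, hQ, hQ'⟩ := h N.index Subgroup.FiniteIndex.index_ne_zero
  set d := Q.natDegree
  have hpow : ∀ (n : ℕ) (x : G), (Φ ^ n) (Additive.ofMul x) = Additive.ofMul (φ^[n] x) := by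
    intro n x
    induction n with
    | zero => rfl
    | succ n ih => rw [pow_succ', Module.End.mul_apply, ih, Function.iterate_succ_apply']; rfl
  let N' : AddSubgroup (Additive G) := N.toAddSubgroup
  have hN' : ∀ x : G, Additive.ofMul x ∈ N' ↔ x ∈ N := fun x => Iff.rfl
  have hall : ∀ x : G, (∀ i ≤ d, φ^[i] x ∈ N) → ∀ i, φ^[i] x ∈ N := by
    intro x hx i
    induction i using Nat.strong_induction_on with
    | _ i ih =>
    rcases Nat.le_or_le i d with hi | hi
    · exact hx i hi
    rw [← hN', ← hpow]
    obtain ⟨y, hy⟩ := hQ' ((Φ ^ (i - d)) (Additive.ofMul x))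
    rw [hQ.as_sum] at hy
    simp only [map_add, map_sum, map_pow, aeval_X, map_mul, aeval_C, LinearMap.add_apply,
      LinearMap.sum_apply, Module.End.mul_apply] at hy
    rw [← Module.End.mul_apply, ← pow_add, show Q.natDegree + (i - d) = i by omega] at hy
    rw [eq_sub_of_add_eq hy]
    apply N'.sub_mem
    · exact N.pow_index_mem (Additive.toMul y)
    · refine N'.sum_mem fun j hj => ?_
      rw [← Module.End.mul_apply (Φ ^ j), ← pow_add, hpow, Module.algebraMap_end_apply]
      apply N'.zsmul_mem
      rw [hN']
      have := Finset.mem_range.1 hj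
      exact ih _ (by omega)
  have heq : ∀ n, d ≤ n → Cn φ N n = Cn φ N d := by
    intro n hn
    ext x
    rw [aux_mem, aux_mem]
    exact ⟨fun hx i hi => hx i (hi.trans hn), fun hx i _ => hall x hx i⟩
  apply Filter.Tendsto.limsup_eq
  have ht : Filter.Tendsto (fun n : ℕ => Real.log ((Cn φ N d).index : ℝ) / ((n : ℝ) + 1))
      Filter.atTop (nhds 0) :=
    Filter.Tendsto.const_div_atTop
      (Filter.tendsto_atTop_add_const_right _ _ tendsto_natCast_atTop_atTop) _
  refine ht.congr' ?_
  filter_upwards [Filter.eventually_ge_atTop d] with n hn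
  rw [heq n hn]

open Polynomial in
theorem aux_lift {A V : Type*} [AddCommGroup A] (Φ : Module.End ℤ A) (p : ℕ) [Fact p.Prime]
    [AddCommGroup V] [Module (ZMod p) V] (π : A →+ V) (ψ : Module.End (ZMod p) V)
    (hker : ∀ x, π x = 0 → ∃ y, x = p • y) (hc : ∀ x, π (Φ x) = ψ (π x))
    (q : (ZMod p)[X]) (hq : q ≠ 0) (hq0 : aeval ψ q = 0) :
    ∃ Q : ℤ[X], Q.Monic ∧ ∀ x, ∃ y, aeval Φ Q x = p • y := by
  have hmon : (q * C q.leadingCoeff⁻¹).Monic := monic_mul_leadingCoeff_inv hq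
  obtain ⟨Q, hQ, -, hQm⟩ := lifts_and_natDegree_eq_and_monic (f := Int.castRingHom (ZMod p))
    (p := q * C q.leadingCoeff⁻¹)
    ((Polynomial.mem_lifts _).2 (Polynomial.map_surjective _ (ZMod.ringHom_surjective _) _)) hmon
  refine ⟨Q, hQm, fun x => hker _ ?_⟩
  have hpow : ∀ (n : ℕ) (x : A), π ((Φ ^ n) x) = (ψ ^ n) (π x) := by
    intro n x
    induction n with
    | zero => rfl
    | succ n ih => rw [pow_succ', Module.End.mul_apply, hc, ih, pow_succ', Module.End.mul_apply]
  have key : ∀ R : ℤ[X], ∀ x, π (aeval Φ R x) = aeval ψ (R.map (Int.castRingHom (ZMod p))) (π x) := by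
    intro R x
    induction R using Polynomial.induction_on' with
    | add a b ha hb => simp [ha, hb]
    | monomial n a =>
      simp [aeval_monomial, Module.algebraMap_end_apply, hpow, Int.cast_smul_eq_zsmul]
  rw [key, hQ, map_mul, hq0]
  simp

open Polynomial in
theorem aux_top {G V : Type*} [CommGroup G] (φ : G →* G) (p : ℕ) [Fact p.Prime]
    [AddCommGroup V] [Module (ZMod p) V] (π : Additive G →+ V) (ψ : Module.End (ZMod p) V)
    (hsurj : Function.Surjective π)
    (hc : ∀ x, π (φ.toAdditive.toIntLinearMap x) = ψ (π x))
    (h : ∀ q : (ZMod p)[X], q ≠ 0 → aeval ψ q ≠ 0) (k : ℕ) :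
    ∃ N : Subgroup G, N.FiniteIndex ∧ Hstar φ N = k * Real.log p := by
  obtain ⟨f, hf⟩ := aux_indep ψ h k
  have hpow : ∀ (n : ℕ) (x : G), π (Additive.ofMul (φ^[n] x)) = (ψ ^ n) (π (Additive.ofMul x)) := by
    intro n x
    induction n with
    | zero => rfl
    | succ n ih =>
      rw [Function.iterate_succ_apply', pow_succ', Module.End.mul_apply, ← ih, ← hc]; rfl
  let L : ∀ n : ℕ, Additive G →+ (Fin (n + 1) × Fin k → ZMod p) := fun n =>
    (LinearMap.pi fun ij : Fin (n + 1) × Fin k =>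
      (f ij.2) ∘ₗ (ψ ^ (ij.1 : ℕ))).toAddMonoidHom.comp π
  have hL : ∀ n, Function.Surjective (L n) := fun n => (hf n).comp hsurj
  have hLapp : ∀ n x ij, L n (Additive.ofMul x) ij = f ij.2 (π (Additive.ofMul (φ^[ij.1] x))) := by
    intro n x ij
    rw [hpow]; rfl
  let M : ∀ n : ℕ, G →* Multiplicative (Fin (n + 1) × Fin k → ZMod p) := fun n =>
    AddMonoidHom.toMultiplicativeRight (L n)
  have hM : ∀ n x, x ∈ (M n).ker ↔ ∀ ij : Fin (n + 1) × Fin k,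
      f ij.2 (π (Additive.ofMul (φ^[ij.1] x))) = 0 := by
    intro n x
    rw [MonoidHom.mem_ker]
    change L n (Additive.ofMul x) = 0 ↔ _
    rw [funext_iff]
    simp only [hLapp, Pi.zero_apply]
  have hidx : ∀ n, (M n).ker.index = p ^ ((n + 1) * k) := by
    intro n
    rw [Subgroup.index_ker, MonoidHom.range_eq_top.2 (hL n), Subgroup.card_top]
    change Nat.card (Fin (n + 1) × Fin k → ZMod p) = _
    simp
  have hp0 : p ≠ 0 := (Fact.out : p.Prime).ne_zero
  have hC : ∀ n, Cn φ (M 0).ker n = (M n).ker := by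
    intro n
    ext x
    rw [aux_mem, hM]
    simp only [hM]
    constructor
    · intro hx ij
      exact hx ij.1 (by have := ij.1.2; omega) (0, ij.2)
    · intro hx i hi ij
      have h0 : ((ij.1 : Fin (0 + 1)) : ℕ) = 0 := by have := ij.1.2; omega
      rw [h0]
      exact hx (⟨i, by omega⟩, ij.2)
  refine ⟨(M 0).ker, ⟨by rw [hidx]; exact pow_ne_zero _ hp0⟩, ?_⟩
  unfold Hstar
  have : (fun n : ℕ => Real.log ((Cn φ (M 0).ker n).index : ℝ) / ((n : ℝ) + 1)) =
      fun _ => k * Real.log p := by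
    funext n
    rw [hC, hidx, Nat.cast_pow, Real.log_pow]
    have : (n : ℝ) + 1 ≠ 0 := by positivity
    push_cast
    field_simp
  rw [this, Filter.limsup_const]

/-- **Dichotomy Theorem for the adjoint algebraic entropy.** For an
endomorphism `φ` of an abelian group `G`, either `ent*(φ) = 0` or `ent*(φ) = ∞`. -/
theorem statement_19 {G : Type*} [CommGroup G] (φ : G →* G) :
    entStar φ = 0 ∨ entStar φ = ⊤ := by
  by_cases h : ∀ p : ℕ, p.Prime → ∃ Q : Polynomial ℤ, Q.Monic ∧ ∀ x, ∃ y,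
      Polynomial.aeval (φ.toAdditive.toIntLinearMap : Module.End ℤ (Additive G)) Q x = p • y
  · left
    have hz : ∀ N : Subgroup G, N.FiniteIndex → Hstar φ N = 0 := fun N hN =>
      aux_zero φ N (aux_monic _ h)
    simp +contextual [entStar, hz]
  · right
    push Not at h
    obtain ⟨p, hp, hno⟩ := h
    have : Fact p.Prime := ⟨hp⟩
    obtain ⟨V, _, _, π, ψ, hs, hker, hc⟩ := aux_quot (φ.toAdditive.toIntLinearMap) p
    have hne : ∀ q : Polynomial (ZMod p), q ≠ 0 → Polynomial.aeval ψ q ≠ 0 := by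
      intro q hq hq0
      obtain ⟨Q, hQ, hQ'⟩ := aux_lift _ p π ψ hker hc q hq hq0
      obtain ⟨x, hx⟩ := hno Q hQ
      obtain ⟨y, hy⟩ := hQ' x
      exact hx y hy
    have hlog : 0 < Real.log p := Real.log_pos (by exact_mod_cast hp.one_lt)
    apply ENNReal.eq_top_of_forall_nnreal_le
    intro r
    obtain ⟨k, hk⟩ := exists_nat_ge ((r : ℝ) / Real.log p)
    obtain ⟨N, hN, hH⟩ := aux_top φ p π ψ hs hc hne k
    have hle : (r : ℝ≥0∞) ≤ ENNReal.ofReal (Hstar φ N) := by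
      rw [hH, ← ENNReal.ofReal_coe_nnreal]
      exact ENNReal.ofReal_le_ofReal ((div_le_iff₀ hlog).1 hk)
    exact hle.trans (le_iSup₂_of_le N hN le_rfl)
end
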